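/- For every a, b, c ∈ ℂ, the formulas defining R_{a,b,c} determine a module over the N=2 Ramond algebra 𝔤: the prescribed operators on the ℤ/2-graded vector space with even basis {v_i, v_i^{+−} : i ∈ ℤ} and odd basis {v_i^+, v_i^- : i ∈ ℤ} satisfy all the defining relations of a 𝔤-module with c₀ = 0. -/

import Mathlib

open Submodule

/-- A module over the `N = 2` Ramond algebra `𝔤`: a `ℤ/2`-graded complex vector
space `V = even ⊕ odd` with parity-preserving operators `L m`, `H m`,
parity-reversing operators `Gp m` (`G_m^+`), `Gm m` (`G_m^-`), and a scalar `c₀`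
(the action of the central element `C`), subject to the defining relations. -/
structure RamondRep (V : Type) [AddCommGroup V] [Module ℂ V] : Type where
  L : ℤ → V →ₗ[ℂ] V
  H : ℤ → V →ₗ[ℂ] V
  Gp : ℤ → V →ₗ[ℂ] V
  Gm : ℤ → V →ₗ[ℂ] V
  c₀ : ℂ
  even : Submodule ℂ V
  odd : Submodule ℂ V
  grading : IsCompl even odd
  L_even : ∀ (m : ℤ), ∀ v ∈ even, L m v ∈ even
  L_odd : ∀ (m : ℤ), ∀ v ∈ odd, L m v ∈ odd
  H_even : ∀ (m : ℤ), ∀ v ∈ even, H m v ∈ even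
  H_odd : ∀ (m : ℤ), ∀ v ∈ odd, H m v ∈ odd
  Gp_even : ∀ (m : ℤ), ∀ v ∈ even, Gp m v ∈ odd
  Gp_odd : ∀ (m : ℤ), ∀ v ∈ odd, Gp m v ∈ even
  Gm_even : ∀ (m : ℤ), ∀ v ∈ even, Gm m v ∈ odd
  Gm_odd : ∀ (m : ℤ), ∀ v ∈ odd, Gm m v ∈ even
  rel_LL : ∀ (m n : ℤ) (v : V),
    L m (L n v) - L n (L m v) =
      ((n : ℂ) - (m : ℂ)) • L (m + n) v +
        ((1 / 12 : ℂ) * ((n : ℂ) ^ 3 - (n : ℂ)) *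
          (if m + n = 0 then (1 : ℂ) else 0) * c₀) • v
  rel_HH : ∀ (m n : ℤ) (v : V),
    H m (H n v) - H n (H m v) =
      ((1 / 3 : ℂ) * (m : ℂ) * (if m + n = 0 then (1 : ℂ) else 0) * c₀) • v
  rel_LH : ∀ (m n : ℤ) (v : V),
    L m (H n v) - H n (L m v) = (n : ℂ) • H (m + n) v
  rel_LGp : ∀ (m p : ℤ) (v : V),
    L m (Gp p v) - Gp p (L m v) = ((p : ℂ) - (m : ℂ) / 2) • Gp (p + m) v
  rel_LGm : ∀ (m p : ℤ) (v : V),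
    L m (Gm p v) - Gm p (L m v) = ((p : ℂ) - (m : ℂ) / 2) • Gm (p + m) v
  rel_HGp : ∀ (m p : ℤ) (v : V),
    H m (Gp p v) - Gp p (H m v) = Gp (m + p) v
  rel_HGm : ∀ (m p : ℤ) (v : V),
    H m (Gm p v) - Gm p (H m v) = -(Gm (m + p) v)
  rel_GpGm : ∀ (p q : ℤ) (v : V),
    Gp p (Gm q v) + Gm q (Gp p v) =
      (-2 : ℂ) • L (p + q) v + ((p : ℂ) - (q : ℂ)) • H (p + q) v +
        ((1 / 3 : ℂ) * ((p : ℂ) ^ 2 - 1 / 4) *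
          (if p + q = 0 then (1 : ℂ) else 0) * c₀) • v
  rel_GpGp : ∀ (p q : ℤ) (v : V), Gp p (Gp q v) + Gp q (Gp p v) = 0
  rel_GmGm : ∀ (p q : ℤ) (v : V), Gm p (Gm q v) + Gm q (Gm p v) = 0

namespace RamondRep

variable {V : Type} [AddCommGroup V] [Module ℂ V]

/-- The weight space `V_μ = {v ∈ V : L₀ v = μ v}`. -/
def wt (ρ : RamondRep V) (μ : ℂ) : Submodule ℂ V :=
  Module.End.eigenspace (ρ.L 0) μ

/-- The parity components, indexed by `ZMod 2`. -/
def parity (ρ : RamondRep V) (τ : ZMod 2) : Submodule ℂ V :=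
  if τ = 0 then ρ.even else ρ.odd

/-- `V` is a weight module: it is the sum of its weight spaces. -/
def IsWeight (ρ : RamondRep V) : Prop := (⨆ μ : ℂ, ρ.wt μ) = ⊤

/-- `V` is cuspidal: a weight module with uniformly bounded weight multiplicities
in each parity. -/
def Cuspidal (ρ : RamondRep V) : Prop :=
  ρ.IsWeight ∧ ∃ p : ℕ, ∀ (μ : ℂ) (τ : ZMod 2),
    Module.rank ℂ ↥(ρ.wt μ ⊓ ρ.parity τ) ≤ (p : Cardinal)

/-- A subspace invariant under all the operators. -/
def IsSubmod (ρ : RamondRep V) (W : Submodule ℂ V) : Prop :=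
  (∀ (m : ℤ), ∀ v ∈ W, ρ.L m v ∈ W) ∧ (∀ (m : ℤ), ∀ v ∈ W, ρ.H m v ∈ W) ∧
    (∀ (m : ℤ), ∀ v ∈ W, ρ.Gp m v ∈ W) ∧ (∀ (m : ℤ), ∀ v ∈ W, ρ.Gm m v ∈ W)

/-- A graded subspace invariant under all the operators. -/
def IsGradedSubmod (ρ : RamondRep V) (W : Submodule ℂ V) : Prop :=
  ρ.IsSubmod W ∧ W = (W ⊓ ρ.even) ⊔ (W ⊓ ρ.odd)

/-- The trivial representation: all operators act by zero. -/
def IsTrivialRep (ρ : RamondRep V) : Prop :=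
  ∀ (m : ℤ) (v : V), ρ.L m v = 0 ∧ ρ.H m v = 0 ∧ ρ.Gp m v = 0 ∧ ρ.Gm m v = 0

/-- `V` is simple: nontrivial, and its only graded submodules are `⊥` and `⊤`. -/
def IsSimple (ρ : RamondRep V) : Prop :=
  ¬ ρ.IsTrivialRep ∧
    ∀ W : Submodule ℂ V, ρ.IsGradedSubmod W → W = ⊥ ∨ W = ⊤

/-- `V` is generated by `v` as a `𝔤`-module. -/
def GeneratedBy (ρ : RamondRep V) (v : V) : Prop :=
  ∀ W : Submodule ℂ V, ρ.IsSubmod W → v ∈ W → W = ⊤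

/-- `V` is a highest weight module. -/
def IsHighestWeight (ρ : RamondRep V) : Prop :=
  ∃ v : V, v ≠ 0 ∧ ρ.GeneratedBy v ∧
    (∃ h h' : ℂ, ρ.L 0 v = h • v ∧ ρ.H 0 v = h' • v) ∧
    (∀ m : ℤ, 0 < m → ρ.L m v = 0 ∧ ρ.H m v = 0 ∧ ρ.Gp m v = 0 ∧ ρ.Gm m v = 0) ∧
    ρ.Gp 0 v = 0

/-- `V` is a lowest weight module. -/
def IsLowestWeight (ρ : RamondRep V) : Prop :=
  ∃ v : V, v ≠ 0 ∧ ρ.GeneratedBy v ∧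
    (∃ h h' : ℂ, ρ.L 0 v = h • v ∧ ρ.H 0 v = h' • v) ∧
    (∀ m : ℤ, m < 0 → ρ.L m v = 0 ∧ ρ.H m v = 0 ∧ ρ.Gp m v = 0 ∧ ρ.Gm m v = 0) ∧
    ρ.Gm 0 v = 0

end RamondRep

/-- The families `(u i)ᵢ, (upm i)ᵢ` (even, `upm = v^{+-}`) and `(up i)ᵢ, (um i)ᵢ`
(odd) realize the `𝔤`-module `R_{a,b,c}` inside `(W, σ)`: together they form a
basis, spanning the even/odd parts as indicated, `c₀ = 0`, and the action is given
by the `R_{a,b,c}` formulas. -/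
def RamondRep.IsRabc {W : Type} [AddCommGroup W] [Module ℂ W] (σ : RamondRep W)
    (u upm up um : ℤ → W) (a b c : ℂ) : Prop :=
  σ.c₀ = 0 ∧
  LinearIndependent ℂ (fun x : (Bool × Bool) × ℤ =>
    if x.1.1 then (if x.1.2 then um x.2 else up x.2)
    else (if x.1.2 then upm x.2 else u x.2)) ∧
  Submodule.span ℂ
    (Set.range u ∪ Set.range upm ∪ Set.range up ∪ Set.range um) = ⊤ ∧
  σ.even = Submodule.span ℂ (Set.range u ∪ Set.range upm) ∧
  σ.odd = Submodule.span ℂ (Set.range up ∪ Set.range um) ∧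
  (∀ m i : ℤ, σ.L m (u i) = (a + (i : ℂ) + b * (m : ℂ)) • u (m + i)) ∧
  (∀ m k : ℤ, σ.L m (up k) = (a + (k : ℂ) + (b - 1 / 2) * (m : ℂ)) • up (m + k)) ∧
  (∀ m k : ℤ, σ.L m (um k) = (a + (k : ℂ) + (b - 1 / 2) * (m : ℂ)) • um (m + k)) ∧
  (∀ m i : ℤ, σ.L m (upm i) = (a + (i : ℂ) + (b - 1) * (m : ℂ)) • upm (m + i) +
    ((1 / 2 : ℂ) * (2 * b - c - 2) * (m : ℂ) ^ 2) • u (i + m)) ∧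
  (∀ m i : ℤ, σ.H m (u i) = c • u (m + i)) ∧
  (∀ m k : ℤ, σ.H m (up k) = (c + 1) • up (m + k)) ∧
  (∀ m k : ℤ, σ.H m (um k) = (c - 1) • um (m + k)) ∧
  (∀ m i : ℤ, σ.H m (upm i) = c • upm (m + i) -
    ((m : ℂ) * (2 * b - c - 2)) • u (m + i)) ∧
  (∀ r i : ℤ, σ.Gp r (u i) = up (r + i)) ∧
  (∀ r i : ℤ, σ.Gm r (u i) = um (r + i)) ∧
  (∀ r i : ℤ, σ.Gp r (up i) = 0) ∧
  (∀ r i : ℤ, σ.Gm r (um i) = 0) ∧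
  (∀ r k : ℤ, σ.Gp r (um k) = upm (k + r) +
    ((c + 2 - 2 * b) * (r : ℂ)) • u (k + r)) ∧
  (∀ r k : ℤ, σ.Gm r (up k) = -upm (r + k) -
    ((2 * a + 2 * (k : ℂ) + (2 * b + c) * (r : ℂ))) • u (k + r)) ∧
  (∀ r i : ℤ, σ.Gm r (upm i) =
    (-(2 * a + 2 * (i : ℂ) + (2 * b + c - 2) * (r : ℂ))) • um (r + i)) ∧
  (∀ r i : ℤ, σ.Gp r (upm i) = ((2 * b - c - 2) * (r : ℂ)) • up (r + i))

/-!
At central charge zero the whole Ramond algebra is controlled by its odd part: the relation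
`{G⁺_p, G⁻_q} = -2 L_{p+q} + (p - q) H_{p+q}` expresses every `L_m` and `H_m` through
anticommutators of odd operators. If moreover `{G⁺, G⁺} = {G⁻, G⁻} = 0` and `G^±` has charge `±1`
under `H_0`, then all remaining relations follow from the super Jacobi identity. For
`x = G⁺_p`, `y = G⁻_q`, `z = G⁺_r` it reads `[{x, y}, z] = -[{z, y}, x]`; its diagonal `p = r`
expresses `[L_m, G⁺_p]` through `[H_m, G⁺_p]`, after which the case `q = -r` reduces
`[H_m, G⁺_r]` to `[H_0, G⁺_{m+r}]`. The brackets of `L` and `H` among themselves are then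
computed by letting them act as derivations on anticommutators. For `R_{a,b,c}` it therefore
suffices to verify the odd relations and the charges on basis vectors.
-/

attribute [local instance] LieRing.ofAssociativeRing

section Ring

variable {A : Type*} [Ring A]

theorem lie_anticommutator (x y z : A) :
    ⁅x, y * z + z * y⁆ = (⁅x, y⁆ * z + z * ⁅x, y⁆) + (y * ⁅x, z⁆ + ⁅x, z⁆ * y) := by
  simp only [Ring.lie_def]
  noncomm_ring

theorem anticommutator_lie_eq_neg {x z : A} (hxz : x * z + z * x = 0) (y : A) :
    ⁅x * y + y * x, z⁆ = -⁅z * y + y * z, x⁆ := by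
  simp only [Ring.lie_def]
  linear_combination (norm := noncomm_ring) y * hxz - hxz * y

end Ring

theorem anticommutator_apply_mem {R M : Type*} [Semiring R] [AddCommMonoid M] [Module R M]
    {x y : Module.End R M} {U W : Submodule R M} (hxU : ∀ v ∈ U, x v ∈ W)
    (hxW : ∀ v ∈ W, x v ∈ U) (hyU : ∀ v ∈ U, y v ∈ W) (hyW : ∀ v ∈ W, y v ∈ U)
    {v : M} (hv : v ∈ U) : (x * y + y * x) v ∈ U :=
  add_mem (hxW _ (hyU v hv)) (hyW _ (hxU v hv))

theorem apply_mem_of_mem_span_union_range {R M N ι : Type*} [Semiring R] [AddCommMonoid M]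
    [Module R M] [AddCommMonoid N] [Module R N] {f : M →ₗ[R] N} {u w : ι → M}
    {P : Submodule R N} (hu : ∀ i, f (u i) ∈ P) (hw : ∀ i, f (w i) ∈ P) :
    ∀ x ∈ span R (Set.range u ∪ Set.range w), f x ∈ P := by
  change span R (Set.range u ∪ Set.range w) ≤ P.comap f
  rw [span_le, Set.union_subset_iff, Set.range_subset_iff, Set.range_subset_iff]
  exact ⟨hu, hw⟩

theorem image_setOf_fst_fst_eq {α ι M : Type*} (f : (α × Bool) × ι → M) (s : α) :
    f '' {x | x.1.1 = s} =
      (Set.range fun i => f ((s, false), i)) ∪ Set.range fun i => f ((s, true), i) := by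
  ext y
  simp [Prod.exists]

/-- The part of the relations of the `N = 2` Ramond algebra at central charge zero from which all
the others follow: the anticommutators of the odd generators, and their charges under `H 0`. The
generators are elements of an associative `K`-algebra, not only operators. -/
structure IsRamondSystem (K : Type*) {A : Type*} [CommRing K] [Ring A] [Algebra K A]
    (L H Gp Gm : ℤ → A) : Prop where
  Gp_Gp : ∀ p q, Gp p * Gp q + Gp q * Gp p = 0
  Gm_Gm : ∀ p q, Gm p * Gm q + Gm q * Gm p = 0
  Gp_Gm : ∀ p q, Gp p * Gm q + Gm q * Gp p =
    (-2 : K) • L (p + q) + ((p : K) - (q : K)) • H (p + q)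
  lie_H_zero_Gp : ∀ p, ⁅H 0, Gp p⁆ = Gp p
  lie_H_zero_Gm : ∀ p, ⁅H 0, Gm p⁆ = -Gm p

namespace IsRamondSystem

section CommRing

variable {K A : Type*} [CommRing K] [Ring A] [Algebra K A] {L H Gp Gm : ℤ → A}

theorem swap (h : IsRamondSystem K L H Gp Gm) : IsRamondSystem K L (-H) Gm Gp where
  Gp_Gp := h.Gm_Gm
  Gm_Gm := h.Gp_Gp
  Gp_Gm p q := by
    rw [add_comm, h.Gp_Gm, add_comm q p, Pi.neg_apply]
    module
  lie_H_zero_Gp p := by rw [Pi.neg_apply, neg_lie, h.lie_H_zero_Gm, neg_neg]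
  lie_H_zero_Gm p := by rw [Pi.neg_apply, neg_lie, h.lie_H_zero_Gp]

theorem jacobi_Gp_Gm_Gp (h : IsRamondSystem K L H Gp Gm) (p q r : ℤ) :
    (-2 : K) • ⁅L (p + q), Gp r⁆ + ((p : K) - q) • ⁅H (p + q), Gp r⁆ =
      (2 : K) • ⁅L (r + q), Gp p⁆ - ((r : K) - q) • ⁅H (r + q), Gp p⁆ := by
  have jacobi := anticommutator_lie_eq_neg (h.Gp_Gp p r) (Gm q)
  simp only [h.Gp_Gm, add_lie, smul_lie] at jacobi
  linear_combination (norm := module) jacobi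

end CommRing

variable {K A : Type*} [Field K] [CharZero K] [Ring A] [Algebra K A] {L H Gp Gm : ℤ → A}

theorem lie_L_Gp_eq_smul_lie_H_Gp (h : IsRamondSystem K L H Gp Gm) (m p : ℤ) :
    ⁅L m, Gp p⁆ = ((p : K) - (m : K) / 2) • ⁅H m, Gp p⁆ := by
  have diagonal := h.jacobi_Gp_Gm_Gp p (m - p) p
  rw [add_sub_cancel, Int.cast_sub] at diagonal
  linear_combination (norm := module) (-1 / 4 : K) • diagonal

theorem lie_H_Gp (h : IsRamondSystem K L H Gp Gm) (m p : ℤ) : ⁅H m, Gp p⁆ = Gp (m + p) := by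
  obtain rfl | hm := eq_or_ne m 0
  · rw [h.lie_H_zero_Gp, zero_add]
  have jacobi := h.jacobi_Gp_Gm_Gp (m + p) (-p) p
  rw [add_neg_cancel_right, add_neg_cancel, h.lie_L_Gp_eq_smul_lie_H_Gp m,
    h.lie_L_Gp_eq_smul_lie_H_Gp 0, h.lie_H_zero_Gp] at jacobi
  push_cast at jacobi
  apply smul_right_injective A (Int.cast_ne_zero (α := K).mpr hm)
  linear_combination (norm := module) (1 / 2 : K) • jacobi

theorem lie_L_Gp (h : IsRamondSystem K L H Gp Gm) (m p : ℤ) :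
    ⁅L m, Gp p⁆ = ((p : K) - (m : K) / 2) • Gp (m + p) := by
  rw [h.lie_L_Gp_eq_smul_lie_H_Gp, h.lie_H_Gp]

theorem lie_H_Gm (h : IsRamondSystem K L H Gp Gm) (m p : ℤ) : ⁅H m, Gm p⁆ = -Gm (m + p) := by
  rw [← h.swap.lie_H_Gp, Pi.neg_apply, neg_lie, neg_neg]

theorem lie_L_Gm (h : IsRamondSystem K L H Gp Gm) (m p : ℤ) :
    ⁅L m, Gm p⁆ = ((p : K) - (m : K) / 2) • Gm (m + p) :=
  h.swap.lie_L_Gp m p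

theorem L_eq_anticommutators (h : IsRamondSystem K L H Gp Gm) (m : ℤ) :
    L m = (-1 / 4 : K) • ((Gp m * Gm 0 + Gm 0 * Gp m) + (Gp 0 * Gm m + Gm m * Gp 0)) := by
  rw [h.Gp_Gm, h.Gp_Gm, add_zero, zero_add]
  module

theorem H_eq_anticommutators (h : IsRamondSystem K L H Gp Gm) (m : ℤ) :
    H m = (1 / 2 : K) •
      ((Gp 1 * Gm (m - 1) + Gm (m - 1) * Gp 1) - (Gp 0 * Gm m + Gm m * Gp 0)) := by
  rw [h.Gp_Gm, h.Gp_Gm, add_sub_cancel, zero_add]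
  push_cast
  module

theorem lie_H_anticommutator (h : IsRamondSystem K L H Gp Gm) (m p q : ℤ) :
    ⁅H m, Gp p * Gm q + Gm q * Gp p⁆ = (2 * (m : K)) • H (m + (p + q)) := by
  have hp := h.Gp_Gm (m + p) q
  have hq := h.Gp_Gm p (m + q)
  rw [add_assoc] at hp
  rw [add_left_comm] at hq
  push_cast at hp hq
  rw [lie_anticommutator, h.lie_H_Gp, h.lie_H_Gm, mul_neg, neg_mul]
  linear_combination (norm := module) hp - hq

theorem lie_L_anticommutator (h : IsRamondSystem K L H Gp Gm) (m p q : ℤ) :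
    ⁅L m, Gp p * Gm q + Gm q * Gp p⁆ =
      (-2 * ((p : K) + q - m)) • L (m + (p + q)) +
        (((p : K) - q) * (p + q)) • H (m + (p + q)) := by
  have hp := h.Gp_Gm (m + p) q
  have hq := h.Gp_Gm p (m + q)
  rw [add_assoc] at hp
  rw [add_left_comm] at hq
  push_cast at hp hq
  rw [lie_anticommutator, h.lie_L_Gp, h.lie_L_Gm]
  simp only [smul_mul_assoc, mul_smul_comm]
  linear_combination (norm := module)
    ((p : K) - (m : K) / 2) • hp + ((q : K) - (m : K) / 2) • hq

theorem lie_L_L (h : IsRamondSystem K L H Gp Gm) (m n : ℤ) :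
    ⁅L m, L n⁆ = ((n : K) - (m : K)) • L (m + n) := by
  rw [h.L_eq_anticommutators n, LieAlgebra.lie_smul, lie_add, h.lie_L_anticommutator,
    h.lie_L_anticommutator, add_zero, zero_add]
  push_cast
  module

theorem lie_L_H (h : IsRamondSystem K L H Gp Gm) (m n : ℤ) :
    ⁅L m, H n⁆ = (n : K) • H (m + n) := by
  rw [h.H_eq_anticommutators n, LieAlgebra.lie_smul, lie_sub, h.lie_L_anticommutator,
    h.lie_L_anticommutator, add_sub_cancel, zero_add]
  push_cast
  module

theorem lie_H_H (h : IsRamondSystem K L H Gp Gm) (m n : ℤ) : ⁅H m, H n⁆ = 0 := by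
  rw [h.H_eq_anticommutators n, LieAlgebra.lie_smul, lie_sub, h.lie_H_anticommutator,
    h.lie_H_anticommutator, add_sub_cancel, zero_add, sub_self, smul_zero]

section Grading

variable {V : Type*} [AddCommGroup V] [Module K V] {L H Gp Gm : ℤ → Module.End K V}
  {U W : Submodule K V}

theorem L_mem (h : IsRamondSystem K L H Gp Gm)
    (hpU : ∀ p, ∀ v ∈ U, Gp p v ∈ W) (hpW : ∀ p, ∀ v ∈ W, Gp p v ∈ U)
    (hmU : ∀ p, ∀ v ∈ U, Gm p v ∈ W) (hmW : ∀ p, ∀ v ∈ W, Gm p v ∈ U) (m : ℤ) :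
    ∀ v ∈ U, L m v ∈ U := by
  intro v hv
  have anticommutator_mem (p q : ℤ) : (Gp p * Gm q + Gm q * Gp p) v ∈ U :=
    anticommutator_apply_mem (hpU p) (hpW p) (hmU q) (hmW q) hv
  rw [h.L_eq_anticommutators]
  exact U.smul_mem _ (add_mem (anticommutator_mem m 0) (anticommutator_mem 0 m))

theorem H_mem (h : IsRamondSystem K L H Gp Gm)
    (hpU : ∀ p, ∀ v ∈ U, Gp p v ∈ W) (hpW : ∀ p, ∀ v ∈ W, Gp p v ∈ U)
    (hmU : ∀ p, ∀ v ∈ U, Gm p v ∈ W) (hmW : ∀ p, ∀ v ∈ W, Gm p v ∈ U) (m : ℤ) :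
    ∀ v ∈ U, H m v ∈ U := by
  intro v hv
  have anticommutator_mem (p q : ℤ) : (Gp p * Gm q + Gm q * Gp p) v ∈ U :=
    anticommutator_apply_mem (hpU p) (hpW p) (hmU q) (hmW q) hv
  rw [h.H_eq_anticommutators]
  exact U.smul_mem _ (sub_mem (anticommutator_mem 1 (m - 1)) (anticommutator_mem 0 m))

end Grading

/-- The Ramond module of central charge zero given by a system of operators whose odd members
exchange two complementary subspaces, its even and odd parts. -/
def toRamondRep {V : Type} [AddCommGroup V] [Module ℂ V] {L H Gp Gm : ℤ → Module.End ℂ V}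
    (h : IsRamondSystem ℂ L H Gp Gm) {even odd : Submodule ℂ V} (grading : IsCompl even odd)
    (Gp_even : ∀ p, ∀ v ∈ even, Gp p v ∈ odd) (Gp_odd : ∀ p, ∀ v ∈ odd, Gp p v ∈ even)
    (Gm_even : ∀ p, ∀ v ∈ even, Gm p v ∈ odd) (Gm_odd : ∀ p, ∀ v ∈ odd, Gm p v ∈ even) :
    RamondRep V where
  L := L
  H := H
  Gp := Gp
  Gm := Gm
  c₀ := 0
  even := even
  odd := odd
  grading := grading
  L_even := h.L_mem Gp_even Gp_odd Gm_even Gm_odd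
  L_odd := h.L_mem Gp_odd Gp_even Gm_odd Gm_even
  H_even := h.H_mem Gp_even Gp_odd Gm_even Gm_odd
  H_odd := h.H_mem Gp_odd Gp_even Gm_odd Gm_even
  Gp_even := Gp_even
  Gp_odd := Gp_odd
  Gm_even := Gm_even
  Gm_odd := Gm_odd
  rel_LL m n v := by
    rw [mul_zero, zero_smul, add_zero]
    exact LinearMap.congr_fun (h.lie_L_L m n) v
  rel_HH m n v := by
    rw [mul_zero, zero_smul]
    exact LinearMap.congr_fun (h.lie_H_H m n) v
  rel_LH m n := LinearMap.congr_fun (h.lie_L_H m n)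
  rel_LGp m p := by
    rw [add_comm p m]
    exact LinearMap.congr_fun (h.lie_L_Gp m p)
  rel_LGm m p := by
    rw [add_comm p m]
    exact LinearMap.congr_fun (h.lie_L_Gm m p)
  rel_HGp m p := LinearMap.congr_fun (h.lie_H_Gp m p)
  rel_HGm m p := LinearMap.congr_fun (h.lie_H_Gm m p)
  rel_GpGm p q v := by
    rw [mul_zero, zero_smul, add_zero]
    exact LinearMap.congr_fun (h.Gp_Gm p q) v
  rel_GpGp p q := LinearMap.congr_fun (h.Gp_Gp p q)
  rel_GmGm p q := LinearMap.congr_fun (h.Gm_Gm p q)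

end IsRamondSystem

namespace Rabc

/-- The underlying space of `R_{a,b,c}`. The first Boolean of an index is the parity of the basis
vector, the second one tells the two families of that parity apart. -/
abbrev Space : Type := ((Bool × Bool) × ℤ) →₀ ℂ

/-- The even basis vector `v_i`. -/
noncomputable def v (i : ℤ) : Space := Finsupp.single ((false, false), i) 1

/-- The even basis vector `v_i^{+-}`. -/
noncomputable def vpm (i : ℤ) : Space := Finsupp.single ((false, true), i) 1

/-- The odd basis vector `v_i^+`. -/
noncomputable def vp (i : ℤ) : Space := Finsupp.single ((true, false), i) 1

/-- The odd basis vector `v_i^-`. -/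
noncomputable def vm (i : ℤ) : Space := Finsupp.single ((true, true), i) 1

/-- The even part of `R_{a,b,c}`. -/
noncomputable def even : Submodule ℂ Space := span ℂ (Set.range v ∪ Set.range vpm)

/-- The odd part of `R_{a,b,c}`. -/
noncomputable def odd : Submodule ℂ Space := span ℂ (Set.range vp ∪ Set.range vm)

theorem v_mem_even (i : ℤ) : v i ∈ even := subset_span (.inl ⟨i, rfl⟩)

theorem vpm_mem_even (i : ℤ) : vpm i ∈ even := subset_span (.inr ⟨i, rfl⟩)

theorem vp_mem_odd (i : ℤ) : vp i ∈ odd := subset_span (.inl ⟨i, rfl⟩)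

theorem vm_mem_odd (i : ℤ) : vm i ∈ odd := subset_span (.inr ⟨i, rfl⟩)

theorem isCompl_even_odd : IsCompl even odd := by
  have parities : IsCompl {x : (Bool × Bool) × ℤ | x.1.1 = false} {x | x.1.1 = true} := by
    have odd_eq_compl : {x : (Bool × Bool) × ℤ | x.1.1 = true} = {x | x.1.1 = false}ᶜ := by
      ext x
      simp
    rw [odd_eq_compl]
    exact isCompl_compl
  let basis := Finsupp.basisSingleOne (R := ℂ) (ι := (Bool × Bool) × ℤ)
  have spans := basis.linearIndependent.isCompl_span_image basis.span_eq parities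
  rwa [image_setOf_fst_fst_eq, image_setOf_fst_fst_eq] at spans

theorem span_basis :
    span ℂ (Set.range v ∪ Set.range vpm ∪ Set.range vp ∪ Set.range vm) = ⊤ := by
  rw [Set.union_assoc, span_union]
  exact isCompl_even_odd.sup_eq_top

theorem linearIndependent_basis :
    LinearIndependent ℂ (fun x : (Bool × Bool) × ℤ =>
      if x.1.1 then (if x.1.2 then vm x.2 else vp x.2)
      else (if x.1.2 then vpm x.2 else v x.2)) := by
  convert (Finsupp.basisSingleOne (R := ℂ) (ι := (Bool × Bool) × ℤ)).linearIndependent with x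
  obtain ⟨⟨_ | _, _ | _⟩, i⟩ := x <;> rfl

section Operators

variable {M : Type*} [AddCommGroup M] [Module ℂ M]

/-- The linear map whose values on `v_i`, `v_i^{+-}`, `v_i^+`, `v_i^-` are prescribed, in this
order. -/
noncomputable def ofBasis (f fpm fp fm : ℤ → M) : Space →ₗ[ℂ] M :=
  Finsupp.linearCombination ℂ fun
    | ((false, false), i) => f i
    | ((false, true), i) => fpm i
    | ((true, false), i) => fp i
    | ((true, true), i) => fm i

variable (f fpm fp fm : ℤ → M) (i : ℤ)

theorem ofBasis_v : ofBasis f fpm fp fm (v i) = f i := by simp [ofBasis, v]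

theorem ofBasis_vpm : ofBasis f fpm fp fm (vpm i) = fpm i := by simp [ofBasis, vpm]

theorem ofBasis_vp : ofBasis f fpm fp fm (vp i) = fp i := by simp [ofBasis, vp]

theorem ofBasis_vm : ofBasis f fpm fp fm (vm i) = fm i := by simp [ofBasis, vm]

theorem linearMap_ext {f g : Space →ₗ[ℂ] M} (hv : ∀ i, f (v i) = g (v i))
    (hvpm : ∀ i, f (vpm i) = g (vpm i)) (hvp : ∀ i, f (vp i) = g (vp i))
    (hvm : ∀ i, f (vm i) = g (vm i)) : f = g := by
  refine Finsupp.basisSingleOne.ext ?_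
  rintro ⟨⟨_ | _, _ | _⟩, i⟩
  exacts [hv i, hvpm i, hvp i, hvm i]

end Operators

variable (a b c : ℂ)

/-- The operator `L_m` on `R_{a,b,c}`. -/
noncomputable def L (m : ℤ) : Module.End ℂ Space :=
  ofBasis
    (fun i => (a + i + b * m) • v (m + i))
    (fun i => (a + i + (b - 1) * m) • vpm (m + i) +
      ((1 / 2) * (2 * b - c - 2) * (m : ℂ) ^ 2) • v (i + m))
    (fun i => (a + i + (b - 1 / 2) * m) • vp (m + i))
    (fun i => (a + i + (b - 1 / 2) * m) • vm (m + i))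

/-- The operator `H_m` on `R_{a,b,c}`. -/
noncomputable def H (m : ℤ) : Module.End ℂ Space :=
  ofBasis
    (fun i => c • v (m + i))
    (fun i => c • vpm (m + i) - (m * (2 * b - c - 2)) • v (m + i))
    (fun i => (c + 1) • vp (m + i))
    (fun i => (c - 1) • vm (m + i))

/-- The operator `G_r^+` on `R_{a,b,c}`. -/
noncomputable def Gp (r : ℤ) : Module.End ℂ Space :=
  ofBasis
    (fun i => vp (r + i))
    (fun i => ((2 * b - c - 2) * r) • vp (r + i))
    (fun _ => 0)
    (fun i => vpm (i + r) + ((c + 2 - 2 * b) * r) • v (i + r))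

/-- The operator `G_r^-` on `R_{a,b,c}`. -/
noncomputable def Gm (r : ℤ) : Module.End ℂ Space :=
  ofBasis
    (fun i => vm (r + i))
    (fun i => (-(2 * a + 2 * i + (2 * b + c - 2) * r)) • vm (r + i))
    (fun i => -vpm (r + i) - (2 * a + 2 * i + (2 * b + c) * r) • v (i + r))
    (fun _ => 0)

theorem L_v (m i : ℤ) : L a b c m (v i) = (a + i + b * m) • v (m + i) := ofBasis_v ..

theorem L_vpm (m i : ℤ) : L a b c m (vpm i) =
    (a + i + (b - 1) * m) • vpm (m + i) +
      ((1 / 2) * (2 * b - c - 2) * (m : ℂ) ^ 2) • v (i + m) :=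
  ofBasis_vpm ..

theorem L_vp (m i : ℤ) : L a b c m (vp i) = (a + i + (b - 1 / 2) * m) • vp (m + i) := ofBasis_vp ..

theorem L_vm (m i : ℤ) : L a b c m (vm i) = (a + i + (b - 1 / 2) * m) • vm (m + i) := ofBasis_vm ..

theorem H_v (m i : ℤ) : H b c m (v i) = c • v (m + i) := ofBasis_v ..

theorem H_vpm (m i : ℤ) : H b c m (vpm i) = c • vpm (m + i) - (m * (2 * b - c - 2)) • v (m + i) :=
  ofBasis_vpm ..

theorem H_vp (m i : ℤ) : H b c m (vp i) = (c + 1) • vp (m + i) := ofBasis_vp ..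

theorem H_vm (m i : ℤ) : H b c m (vm i) = (c - 1) • vm (m + i) := ofBasis_vm ..

theorem Gp_v (r i : ℤ) : Gp b c r (v i) = vp (r + i) := ofBasis_v ..

theorem Gp_vpm (r i : ℤ) : Gp b c r (vpm i) = ((2 * b - c - 2) * r) • vp (r + i) := ofBasis_vpm ..

theorem Gp_vp (r i : ℤ) : Gp b c r (vp i) = 0 := ofBasis_vp ..

theorem Gp_vm (r i : ℤ) : Gp b c r (vm i) = vpm (i + r) + ((c + 2 - 2 * b) * r) • v (i + r) :=
  ofBasis_vm ..

theorem Gm_v (r i : ℤ) : Gm a b c r (v i) = vm (r + i) := ofBasis_v ..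

theorem Gm_vpm (r i : ℤ) : Gm a b c r (vpm i) =
    (-(2 * a + 2 * i + (2 * b + c - 2) * r)) • vm (r + i) :=
  ofBasis_vpm ..

theorem Gm_vp (r i : ℤ) : Gm a b c r (vp i) =
    -vpm (r + i) - (2 * a + 2 * i + (2 * b + c) * r) • v (i + r) :=
  ofBasis_vp ..

theorem Gm_vm (r i : ℤ) : Gm a b c r (vm i) = 0 := ofBasis_vm ..

theorem Gp_Gp (p q : ℤ) : Gp b c p * Gp b c q + Gp b c q * Gp b c p = 0 := by
  apply linearMap_ext <;> intro i <;>
    simp only [LinearMap.add_apply, Module.End.mul_apply, LinearMap.zero_apply, map_add, map_smul,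
      map_zero, Gp_v, Gp_vpm, Gp_vp, Gp_vm, Int.add_comm, Int.add_left_comm] <;>
    module

theorem Gm_Gm (p q : ℤ) : Gm a b c p * Gm a b c q + Gm a b c q * Gm a b c p = 0 := by
  apply linearMap_ext <;> intro i <;>
    simp only [LinearMap.add_apply, Module.End.mul_apply, LinearMap.zero_apply, map_sub, map_neg,
      map_smul, map_zero, Gm_v, Gm_vpm, Gm_vp, Gm_vm, Int.cast_add, Int.add_comm,
      Int.add_left_comm] <;>
    module

theorem Gp_Gm (p q : ℤ) :
    Gp b c p * Gm a b c q + Gm a b c q * Gp b c p =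
      (-2 : ℂ) • L a b c (p + q) + ((p : ℂ) - (q : ℂ)) • H b c (p + q) := by
  apply linearMap_ext <;> intro i <;>
    simp only [LinearMap.add_apply, LinearMap.smul_apply, Module.End.mul_apply, map_add, map_sub,
      map_neg, map_smul, map_zero, L_v, L_vpm, L_vp, L_vm, H_v, H_vpm, H_vp, H_vm, Gp_v, Gp_vpm,
      Gp_vp, Gp_vm, Gm_v, Gm_vpm, Gm_vp, Gm_vm, Int.cast_add, Int.add_comm, Int.add_left_comm] <;>
    module

theorem H_zero :
    H b c 0 = ofBasis (fun i => c • v i) (fun i => c • vpm i)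
      (fun i => (c + 1) • vp i) (fun i => (c - 1) • vm i) := by
  simp only [H, zero_add, Int.cast_zero, zero_mul, zero_smul, sub_zero]

theorem commutator_H_zero_Gp (p : ℤ) :
    H b c 0 * Gp b c p - Gp b c p * H b c 0 = Gp b c p := by
  rw [H_zero]
  apply linearMap_ext <;> intro i <;>
    simp only [LinearMap.sub_apply, Module.End.mul_apply, map_add, map_smul, map_zero, ofBasis_v,
      ofBasis_vpm, ofBasis_vp, ofBasis_vm, Gp_v, Gp_vpm, Gp_vp, Gp_vm] <;>
    module

theorem commutator_H_zero_Gm (p : ℤ) :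
    H b c 0 * Gm a b c p - Gm a b c p * H b c 0 = -Gm a b c p := by
  rw [H_zero]
  apply linearMap_ext <;> intro i <;>
    simp only [LinearMap.sub_apply, LinearMap.neg_apply, Module.End.mul_apply, map_sub, map_neg,
      map_smul, map_zero, ofBasis_v, ofBasis_vpm, ofBasis_vp, ofBasis_vm, Gm_v, Gm_vpm, Gm_vp,
      Gm_vm] <;>
    module

theorem isRamondSystem : IsRamondSystem ℂ (L a b c) (H b c) (Gp b c) (Gm a b c) where
  Gp_Gp := Gp_Gp b c
  Gm_Gm := Gm_Gm a b c
  Gp_Gm := Gp_Gm a b c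
  lie_H_zero_Gp := commutator_H_zero_Gp b c
  lie_H_zero_Gm := commutator_H_zero_Gm a b c

theorem Gp_mem_odd (r : ℤ) : ∀ x ∈ even, Gp b c r x ∈ odd :=
  apply_mem_of_mem_span_union_range
    (fun i => by simp only [Gp_v, vp_mem_odd])
    (fun i => by simp only [Gp_vpm, smul_mem, vp_mem_odd])

theorem Gp_mem_even (r : ℤ) : ∀ x ∈ odd, Gp b c r x ∈ even :=
  apply_mem_of_mem_span_union_range
    (fun i => by simp only [Gp_vp, zero_mem])
    (fun i => by simp only [Gp_vm, add_mem, smul_mem, v_mem_even, vpm_mem_even])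

theorem Gm_mem_odd (r : ℤ) : ∀ x ∈ even, Gm a b c r x ∈ odd :=
  apply_mem_of_mem_span_union_range
    (fun i => by simp only [Gm_v, vm_mem_odd])
    (fun i => by simp only [Gm_vpm, smul_mem, vm_mem_odd])

theorem Gm_mem_even (r : ℤ) : ∀ x ∈ odd, Gm a b c r x ∈ even :=
  apply_mem_of_mem_span_union_range
    (fun i => by simp only [Gm_vp, sub_mem, neg_mem, smul_mem, v_mem_even, vpm_mem_even])
    (fun i => by simp only [Gm_vm, zero_mem])

/-- The module `R_{a,b,c}`. -/
noncomputable def ramondRep : RamondRep Space :=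
  (isRamondSystem a b c).toRamondRep isCompl_even_odd
    (Gp_mem_odd b c) (Gp_mem_even b c) (Gm_mem_odd a b c) (Gm_mem_even a b c)

theorem isRabc_ramondRep : (ramondRep a b c).IsRabc v vpm vp vm a b c :=
  ⟨rfl, linearIndependent_basis, span_basis, rfl, rfl,
    L_v a b c, L_vp a b c, L_vm a b c, L_vpm a b c,
    H_v b c, H_vp b c, H_vm b c, H_vpm b c,
    Gp_v b c, Gm_v a b c, Gp_vp b c, Gm_vm a b c,
    Gp_vm b c, Gm_vp a b c, Gm_vpm a b c, Gp_vpm b c⟩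

end Rabc

/-- for every `a, b, c ∈ ℂ` the formulas defining `R_{a,b,c}`
determine a module over the `N = 2` Ramond algebra (with `c₀ = 0`) on the vector
space with even basis `{v_i, v_i^{+-}}` and odd basis `{v_i^+, v_i^-}`. -/
theorem stmt14 (a b c : ℂ) :
    ∃ σ : RamondRep (((Bool × Bool) × ℤ) →₀ ℂ),
      σ.IsRabc (fun i => Finsupp.single ((false, false), i) (1 : ℂ))
        (fun i => Finsupp.single ((false, true), i) (1 : ℂ))
        (fun i => Finsupp.single ((true, false), i) (1 : ℂ))
        (fun i => Finsupp.single ((true, true), i) (1 : ℂ)) a b c := by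
  exact ⟨Rabc.ramondRep a b c, Rabc.isRabc_ramondRep a b c⟩
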